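/- Let K = ℝ. Consider the list of algebras: S(0,1,1,0,−1,2); S(0,4,−4,−4,4,0); S(0,εt,t,0,δt,0) for t, ε, δ ∈ {1,−1}; and S(0,(1+t)²/4,(t²−1)/4,1,(1−t²)/4,t) for t ∈ ℝ* with t ≠ 1 and t ≠ −1. Then: (1) every endo-commutative algebra S(0,q,a,b,c,d) over ℝ with a ≠ 0 and c ≠ 0 is isomorphic to at least one algebra in this list; (2) any two algebras in the list with distinct parameter tuples are non-isomorphic. -/

import Mathlib

/-- Multiplication of the 2-dimensional algebra `S(p,q,a,b,c,d)` on `K × K`,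
with basis `e = (1,0)`, `f = (0,1)` and table
`e*e = f`, `f*f = p•e + q•f`, `e*f = a•e + b•f`, `f*e = c•e + d•f`. -/
def mulS {K : Type*} [Field K] (p q a b c d : K) (u v : K × K) : K × K :=
  (u.1 * v.2 * a + u.2 * v.1 * c + u.2 * v.2 * p,
   u.1 * v.1 + u.1 * v.2 * b + u.2 * v.1 * d + u.2 * v.2 * q)

/-- `S(p,q,a,b,c,d)` is endo-commutative: `(x*x)*(y*y) = (x*y)*(x*y)`. -/
def EndoComm {K : Type*} [Field K] (p q a b c d : K) : Prop :=
  ∀ u v : K × K,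
    mulS p q a b c d (mulS p q a b c d u u) (mulS p q a b c d v v) =
      mulS p q a b c d (mulS p q a b c d u v) (mulS p q a b c d u v)

/-- `S(p,q,a,b,c,d)` and `S(p',q',a',b',c',d')` are isomorphic: there is a bijective
`K`-linear map between them preserving multiplication. -/
def IsoS {K : Type*} [Field K] (p q a b c d p' q' a' b' c' d' : K) : Prop :=
  ∃ φ : (K × K) ≃ₗ[K] (K × K),
    ∀ u v : K × K,
      φ (mulS p q a b c d u v) = mulS p' q' a' b' c' d' (φ u) (φ v)

/-- The parameter tuples appearing in the classification list over `ℝ`. -/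
def InListR (p q a b c d : ℝ) : Prop :=
  (p, q, a, b, c, d) = ((0 : ℝ), 1, 1, 0, -1, 2) ∨
  (p, q, a, b, c, d) = ((0 : ℝ), 4, -4, -4, 4, 0) ∨
  (∃ t ε δ : ℝ, (t = 1 ∨ t = -1) ∧ (ε = 1 ∨ ε = -1) ∧ (δ = 1 ∨ δ = -1) ∧
      (p, q, a, b, c, d) = ((0 : ℝ), ε * t, t, 0, δ * t, 0)) ∨
  (∃ t : ℝ, t ≠ 0 ∧ t ≠ 1 ∧ t ≠ -1 ∧
      (p, q, a, b, c, d) =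
        ((0 : ℝ), (1 + t) ^ 2 / 4, (t ^ 2 - 1) / 4, 1, (1 - t ^ 2) / 4, t))

/-!
Since `f = e * e`, an isomorphism out of `S(0,q,a,b,c,d)` is the choice of an element `E` of the
target such that `E` and `E * E` form a basis with the prescribed multiplication table.
Endo-commutativity forces `c = a` or `c = -a`.

If `c = a`, then `b = d = 0` and `q = ± a`, and rescaling `e` leaves only signs. The four resulting
algebras are told apart by the existence of a left identity and of zero divisors.

If `c = -a`, all squares lie on the line `K f`: `u * u = N(u) f` with
`N(x, y) = x ^ 2 + (b + d) x y + q y ^ 2`. Isomorphisms therefore preserve that line, so they are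
triangular, which makes the ratio `a / q` and the square class of the discriminant
`(b + d) ^ 2 - 4 q` invariants. Endo-commutativity gives
`(a ^ 2 - q ^ 2) ((b + d) ^ 2 - 4 q) = 0` and `q (d - b) = a (b + d)`. When the
discriminant vanishes the algebra is determined by `(b, d)` up to scaling, and
`a / q = (d - b) / (d + b)` recovers the point `[b : d]` of the projective line; otherwise
`a = ± q`, and completing the square in `N` brings `b` and `d` to `0`.
-/

variable {K : Type*} [Field K] {p q a b c d p' q' a' b' c' d' : K}

lemma four_ne_zero_of_two_ne_zero (h2 : (2 : K) ≠ 0) : (4 : K) ≠ 0 := by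
  rw [← two_add_two_eq_four, ← two_mul]
  exact mul_ne_zero h2 h2

lemma two_ne_zero_of_not_isSquare_neg_one (hneg : ¬IsSquare (-1 : K)) : (2 : K) ≠ 0 :=
  fun h2 => hneg ⟨1, by linear_combination -h2⟩

lemma mulS_smul_add_smul (p q a b c d r s r' s' : K) (u v : K × K) :
    mulS p q a b c d (r • u + s • v) (r' • u + s' • v) =
      (r * r') • mulS p q a b c d u u + (r * s') • mulS p q a b c d u v +
        (s * r') • mulS p q a b c d v u + (s * s') • mulS p q a b c d v v := by
  ext <;> simp only [mulS, Prod.fst_add, Prod.snd_add, Prod.smul_fst, Prod.smul_snd,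
    smul_eq_mul] <;> ring

lemma IsoS.symm (h : IsoS p q a b c d p' q' a' b' c' d') :
    IsoS p' q' a' b' c' d' p q a b c d := by
  obtain ⟨φ, hφ⟩ := h
  exact ⟨φ.symm, fun u v => φ.injective (by simp [hφ])⟩

lemma isoS_iff_exists_basis :
    IsoS p q a b c d p' q' a' b' c' d' ↔
      ∃ E F : K × K, LinearIndependent K ![E, F] ∧
        mulS p' q' a' b' c' d' E E = F ∧
        mulS p' q' a' b' c' d' F F = p • E + q • F ∧
        mulS p' q' a' b' c' d' E F = a • E + b • F ∧
        mulS p' q' a' b' c' d' F E = c • E + d • F := by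
  constructor
  · rintro ⟨φ, hφ⟩
    have φ_apply (r s : K) : φ (r, s) = r • φ (1, 0) + s • φ (0, 1) := by
      rw [← map_smul, ← map_smul, ← map_add]; simp
    refine ⟨φ (1, 0), φ (0, 1), LinearIndependent.pair_iff.2 fun r s hrs => ?_, ?_, ?_, ?_, ?_⟩
    · rwa [← φ_apply, φ.map_eq_zero_iff, Prod.mk_eq_zero] at hrs
    all_goals rw [← hφ]; simp [mulS, ← φ_apply]
  · rintro ⟨E, F, hEF, hEE, hFF, hE, hF⟩
    let φ : K × K →ₗ[K] K × K :=
      (LinearMap.toSpanSingleton K _ E).coprod (LinearMap.toSpanSingleton K _ F)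
    have φ_apply (u : K × K) : φ u = u.1 • E + u.2 • F := by simp [φ]
    have φ_injective : Function.Injective φ := by
      refine (injective_iff_map_eq_zero φ).2 fun u hu => ?_
      rw [φ_apply] at hu
      exact Prod.ext_iff.2 (LinearIndependent.pair_iff.1 hEF _ _ hu)
    refine ⟨.ofInjectiveEndo φ φ_injective, fun u v => ?_⟩
    simp only [LinearEquiv.coe_ofInjectiveEndo, φ_apply, mulS_smul_add_smul, hEE, hFF, hE, hF]
    simp only [mulS]
    module

lemma isoS_scale (p q a b c d : K) {x : K} (hx : x ≠ 0) :
    IsoS (x ^ 3 * p) (x ^ 2 * q) (x ^ 2 * a) (x * b) (x ^ 2 * c) (x * d) p q a b c d := by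
  refine isoS_iff_exists_basis.2 ⟨(x, 0), (0, x ^ 2), LinearIndependent.pair_iff.2 ?_, ?_⟩
  · simp [hx]
  · refine ⟨?_, ?_, ?_, ?_⟩ <;> ext <;>
      simp only [mulS, Prod.smul_mk, Prod.mk_add_mk, smul_eq_mul] <;> ring

lemma isoS_neg_iff_exists_triangular :
    IsoS 0 q a b c d 0 q' a' b' (-a') d' ↔
      ∃ x y w : K, x ≠ 0 ∧ w ≠ 0 ∧ w = x ^ 2 + (b' + d') * (x * y) + q' * y ^ 2 ∧
        q = w * q' ∧ a = w * a' ∧ c = -(w * a') ∧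
        b = x * b' + y * (q' - a') ∧ d = x * d' + y * (q' + a') := by
  rw [isoS_iff_exists_basis]
  constructor
  · rintro ⟨⟨x, y⟩, ⟨z, w⟩, hli, hEE, hFF, hEF, hFE⟩
    rw [LinearIndependent.pair_iff] at hli
    simp only [mulS, Prod.smul_mk, Prod.mk_add_mk, smul_eq_mul, Prod.mk.injEq] at hEE hFF hEF hFE
    obtain rfl : z = 0 := by linear_combination -hEE.1
    have hw : w ≠ 0 := by
      rintro rfl
      simpa using hli 0 1 (by simp)
    have hx : x ≠ 0 := by
      rintro rfl
      exact hw (hli w (-y) (by simp [mul_comm])).1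
    have ha : a = w * a' := mul_right_cancel₀ hx (by linear_combination -hEF.1)
    have hc : c = -(w * a') := mul_right_cancel₀ hx (by linear_combination -hFE.1)
    refine ⟨x, y, w, hx, hw, by linear_combination -hEE.2,
      mul_right_cancel₀ hw (by linear_combination -hFF.2), ha, hc,
      mul_right_cancel₀ hw ?_, mul_right_cancel₀ hw ?_⟩
    · linear_combination -hEF.2 - y * ha
    · linear_combination -hFE.2 - y * hc
  · rintro ⟨x, y, w, hx, hw, hN, rfl, rfl, rfl, rfl, rfl⟩
    refine ⟨(x, y), (0, w), LinearIndependent.pair_iff.2 fun r s => ?_, ?_⟩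
    · simp +contextual [hx, hw]
    · subst hN
      refine ⟨?_, ?_, ?_, ?_⟩ <;> ext <;>
        simp only [mulS, Prod.smul_mk, Prod.mk_add_mk, smul_eq_mul] <;> ring

lemma EndoComm.equations (h : EndoComm 0 q a b c d) :
    a ^ 2 = c ^ 2 ∧ a * b * (a + c) = 0 ∧ c * d * (a + c) = 0 ∧
      a ^ 2 + a * b * (b + d) + b ^ 2 * q = q ^ 2 ∧
      c ^ 2 + c * d * (b + d) + d ^ 2 * q = q ^ 2 ∧
      q * (d - b) = a * b - c * d := by
  have hef := h (1, 0) (0, 1)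
  have hfe := h (0, 1) (1, 0)
  have hsum := h (1, 1) (1, 0)
  simp only [mulS, Prod.mk.injEq] at hef hfe hsum
  refine ⟨?_, ?_, ?_, ?_, ?_, ?_⟩
  · linear_combination hsum.1 - hfe.1
  · linear_combination -hef.1
  · linear_combination -hfe.1
  · linear_combination -hef.2
  · linear_combination -hfe.2
  · linear_combination hfe.2 - hsum.2

lemma EndoComm.of_comm (h2 : (2 : K) ≠ 0) (ha : a ≠ 0) (h : EndoComm 0 q a b a d) :
    b = 0 ∧ d = 0 ∧ q ^ 2 = a ^ 2 := by
  obtain ⟨-, hb, hd, hq, -, -⟩ := h.equations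
  have h2a : a + a ≠ 0 := by rw [← two_mul]; exact mul_ne_zero h2 ha
  obtain rfl : b = 0 := by simpa [ha, h2a] using hb
  obtain rfl : d = 0 := by simpa [ha, h2a] using hd
  exact ⟨rfl, rfl, by linear_combination -hq⟩

lemma EndoComm.mul_sub_eq_of_neg (h : EndoComm 0 q a b (-a) d) : q * (d - b) = a * (b + d) := by
  obtain ⟨-, -, -, -, -, hsum⟩ := h.equations
  linear_combination hsum

lemma EndoComm.ne_zero_of_neg (ha : a ≠ 0) (h : EndoComm 0 q a b (-a) d) : q ≠ 0 := by
  rintro rfl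
  obtain ⟨-, -, -, hef, -, -⟩ := h.equations
  have hs : b + d = 0 := by simpa [ha] using h.mul_sub_eq_of_neg
  exact ha ((pow_eq_zero_iff two_ne_zero).1 (by linear_combination hef - a * b * hs))

lemma EndoComm.factor_of_neg (h : EndoComm 0 q a b (-a) d) :
    (a ^ 2 - q ^ 2) * ((b + d) ^ 2 - 4 * q) = 0 := by
  obtain ⟨-, -, -, hef, hfe, -⟩ := h.equations
  linear_combination (q * (d - b) - a * (b + d)) * h.mul_sub_eq_of_neg - 2 * q * (hef + hfe)

lemma EndoComm.of_neg (h2 : (2 : K) ≠ 0) (ha : a ≠ 0) (h : EndoComm 0 q a b (-a) d) :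
    (q = (b + d) ^ 2 / 4 ∧ a = (d ^ 2 - b ^ 2) / 4) ∨
      ((b + d) ^ 2 - 4 * q ≠ 0 ∧ ∃ ε : K, ε ^ 2 = 1 ∧ a = ε * q ∧ d - b = ε * (b + d)) := by
  have hq := h.ne_zero_of_neg ha
  have hsum := h.mul_sub_eq_of_neg
  rcases eq_or_ne ((b + d) ^ 2 - 4 * q) 0 with hdisc | hdisc
  · have h4 := four_ne_zero_of_two_ne_zero h2
    have hs : b + d ≠ 0 := fun hs => by simp [hs, h4, hq] at hdisc
    refine .inl ⟨by field_simp; linear_combination -hdisc,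
      (eq_div_iff h4).2 (mul_right_cancel₀ hs ?_)⟩
    linear_combination -4 * hsum - (d - b) * hdisc
  · have hε : (a / q) ^ 2 = 1 := by
      field_simp
      linear_combination (mul_eq_zero.1 h.factor_of_neg).resolve_right hdisc
    exact .inr ⟨hdisc, a / q, hε, by field_simp, by field_simp; linear_combination hsum⟩

/-- The classification list over an arbitrary field; `InListR` is the case `K = ℝ`. -/
def IsNormalForm (p q a b c d : K) : Prop :=
  (p, q, a, b, c, d) = ((0 : K), 1, 1, 0, -1, 2) ∨
  (p, q, a, b, c, d) = ((0 : K), 4, -4, -4, 4, 0) ∨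
  (∃ t ε δ : K, (t = 1 ∨ t = -1) ∧ (ε = 1 ∨ ε = -1) ∧ (δ = 1 ∨ δ = -1) ∧
      (p, q, a, b, c, d) = ((0 : K), ε * t, t, 0, δ * t, 0)) ∨
  (∃ t : K, t ≠ 0 ∧ t ≠ 1 ∧ t ≠ -1 ∧
      (p, q, a, b, c, d) =
        ((0 : K), (1 + t) ^ 2 / 4, (t ^ 2 - 1) / 4, 1, (1 - t ^ 2) / 4, t))

/-- The algebra `S(p,q,a,b,c,d)` is isomorphic to a member of the classification list. -/
def HasNormalForm (p q a b c d : K) : Prop :=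
  ∃ p' q' a' b' c' d' : K, IsNormalForm p' q' a' b' c' d' ∧ IsoS p q a b c d p' q' a' b' c' d'

lemma exists_sign_mul_sq_eq (hsq : ∀ x : K, IsSquare x ∨ IsSquare (-x)) {r : K} (hr : r ≠ 0) :
    ∃ τ x : K, τ ^ 2 = 1 ∧ x ≠ 0 ∧ r = τ * x ^ 2 := by
  rcases hsq r with ⟨x, hx⟩ | ⟨x, hx⟩
  · exact ⟨1, x, by simp, by grind, by linear_combination hx⟩
  · exact ⟨-1, x, by simp, by grind, by linear_combination -hx⟩

lemma hasNormalForm_comm (hsq : ∀ x : K, IsSquare x ∨ IsSquare (-x)) (ha : a ≠ 0)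
    (hqa : q ^ 2 = a ^ 2) : HasNormalForm 0 q a 0 a 0 := by
  obtain ⟨t, x, ht, hx, hat⟩ := exists_sign_mul_sq_eq hsq ha
  have hε : (q / a) ^ 2 = 1 := by field_simp; exact hqa
  refine ⟨0, q / a * t, t, 0, t, 0, .inr <| .inr <| .inl ⟨t, q / a, 1, sq_eq_one_iff.1 ht,
    sq_eq_one_iff.1 hε, .inl rfl, by simp⟩, ?_⟩
  convert isoS_scale 0 (q / a * t) t 0 t 0 hx using 1 <;> grind

lemma hasNormalForm_of_discrim_eq_zero (h2 : (2 : K) ≠ 0) (ha : (d ^ 2 - b ^ 2) / 4 ≠ 0) :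
    HasNormalForm 0 ((b + d) ^ 2 / 4) ((d ^ 2 - b ^ 2) / 4) b (-((d ^ 2 - b ^ 2) / 4)) d := by
  have h4 := four_ne_zero_of_two_ne_zero h2
  rcases eq_or_ne b 0 with rfl | hb
  · refine ⟨_, _, _, _, _, _, .inl rfl, ?_⟩
    convert isoS_scale 0 1 1 0 (-1) 2 (x := d / 2) (by grind) using 1 <;> grind
  rcases eq_or_ne d 0 with rfl | hd
  · refine ⟨_, _, _, _, _, _, .inr <| .inl rfl, ?_⟩
    convert isoS_scale 0 4 (-4) (-4) 4 0 (x := b / -4) (by grind) using 1 <;> grind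
  · refine ⟨_, _, _, _, _, _, .inr <| .inr <| .inr
      ⟨d / b, div_ne_zero hd hb, by grind, by grind, rfl⟩, ?_⟩
    convert isoS_scale 0 _ _ 1 _ (d / b) hb using 1 <;> field_simp <;> ring

lemma hasNormalForm_of_discrim_ne_zero (h2 : (2 : K) ≠ 0)
    (hsq : ∀ x : K, IsSquare x ∨ IsSquare (-x)) {ε : K} (hq : q ≠ 0) (hε : ε ^ 2 = 1)
    (hdb : d - b = ε * (b + d)) (hdisc : (b + d) ^ 2 - 4 * q ≠ 0) :
    HasNormalForm 0 q (ε * q) b (-(ε * q)) d := by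
  obtain ⟨τ, x, hτ, hx, hτx⟩ : ∃ τ x : K, τ ^ 2 = 1 ∧ x ≠ 0 ∧ q - ((b + d) / 2) ^ 2 = τ * x ^ 2 :=
    exists_sign_mul_sq_eq hsq (by grind)
  have hτ0 : τ ≠ 0 := by rintro rfl; simp at hτ
  have hετ : (ε * τ) ^ 2 = 1 := by rw [mul_pow, hε, hτ, one_mul]
  refine ⟨0, τ, ε * τ, 0, -(ε * τ), 0, ?_, ?_⟩
  · refine .inr <| .inr <| .inl ⟨ε * τ, ε, -1, sq_eq_one_iff.1 hετ,
      sq_eq_one_iff.1 hε, .inr rfl, ?_⟩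
    simp [← mul_assoc, ← pow_two, hε]
  · -- With `y = τ * ((b + d) / 2)`, `x ^ 2 + τ * y ^ 2 = τ * q` is the completed square `hτx`.
    refine isoS_neg_iff_exists_triangular.2
      ⟨x, τ * ((b + d) / 2), τ * q, hx, mul_ne_zero hτ0 hq, ?_, ?_, ?_, ?_, ?_, ?_⟩ <;> grind

theorem EndoComm.hasNormalForm (h2 : (2 : K) ≠ 0) (hsq : ∀ x : K, IsSquare x ∨ IsSquare (-x))
    (ha : a ≠ 0) (h : EndoComm 0 q a b c d) : HasNormalForm 0 q a b c d := by
  rcases sq_eq_sq_iff_eq_or_eq_neg.1 h.equations.1.symm with rfl | rfl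
  · obtain ⟨rfl, rfl, hqa⟩ := h.of_comm h2 ha
    exact hasNormalForm_comm hsq ha hqa
  · rcases h.of_neg h2 ha with ⟨rfl, rfl⟩ | ⟨hdisc, ε, hε, rfl, hdb⟩
    · exact hasNormalForm_of_discrim_eq_zero h2 ha
    · exact hasNormalForm_of_discrim_ne_zero h2 hsq (h.ne_zero_of_neg ha) hε hdb hdisc

lemma IsoS.exists_leftIdentity (h : IsoS p q a b c d p' q' a' b' c' d')
    (hu : ∃ u, ∀ v, mulS p q a b c d u v = v) :
    ∃ u, ∀ v, mulS p' q' a' b' c' d' u v = v := by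
  obtain ⟨φ, hφ⟩ := h
  obtain ⟨u, hu⟩ := hu
  refine ⟨φ u, fun v => ?_⟩
  rw [← φ.apply_symm_apply v, ← hφ, hu]

lemma IsoS.exists_mul_eq_zero (h : IsoS p q a b c d p' q' a' b' c' d')
    (huv : ∃ u v, u ≠ 0 ∧ v ≠ 0 ∧ mulS p q a b c d u v = 0) :
    ∃ u v, u ≠ 0 ∧ v ≠ 0 ∧ mulS p' q' a' b' c' d' u v = 0 := by
  obtain ⟨φ, hφ⟩ := h
  obtain ⟨u, v, hu, hv, huv⟩ := huv
  exact ⟨φ u, φ v, by simpa, by simpa, by rw [← hφ, huv, map_zero]⟩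

lemma exists_leftIdentity_comm_iff {t ε : K} (ht : t ^ 2 = 1) :
    (∃ u, ∀ v, mulS 0 (ε * t) t 0 t 0 u v = v) ↔ ε = 1 := by
  constructor
  · rintro ⟨u, hu⟩
    have hue := congrArg Prod.fst (hu (1, 0))
    have huf := congrArg Prod.snd (hu (0, 1))
    simp only [mulS, zero_mul, mul_zero, mul_one, zero_add, add_zero] at hue huf
    linear_combination huf - ε * hue
  · rintro rfl
    refine ⟨(0, t), fun v => ?_⟩
    ext <;> simp [mulS, mul_right_comm t, ← pow_two, ht]

lemma eq_zero_of_sq_add_sq_eq_zero (hneg : ¬IsSquare (-1 : K)) {x y : K}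
    (h : x ^ 2 + y ^ 2 = 0) : x = 0 ∧ y = 0 := by
  have hy : y = 0 := by
    by_contra hy
    refine hneg ⟨x / y, ?_⟩
    field_simp
    linear_combination -h
  exact ⟨by simpa [hy] using h, hy⟩

lemma exists_mul_eq_zero_comm_iff (hneg : ¬IsSquare (-1 : K)) {t ε : K} (ht : t ^ 2 = 1)
    (hε : ε ^ 2 = 1) :
    (∃ u v, u ≠ 0 ∧ v ≠ 0 ∧ mulS 0 (ε * t) t 0 t 0 u v = 0) ↔ ε * t = 1 := by
  constructor
  · rintro ⟨⟨x, y⟩, ⟨z, w⟩, hu, hv, huv⟩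
    by_contra hεt_ne_one
    have hεt : ε * t = -1 :=
      (sq_eq_one_iff.1 (by rw [mul_pow, hε, ht, one_mul])).resolve_left hεt_ne_one
    have ht0 : t ≠ 0 := by rintro rfl; simp at ht
    simp only [mulS, hεt, Prod.mk_eq_zero] at huv
    have him : x * w + y * z = 0 := mul_left_cancel₀ ht0 (by linear_combination huv.1)
    have hz : (x ^ 2 + y ^ 2) * z = 0 := by linear_combination x * huv.2 + y * him
    have hw : (x ^ 2 + y ^ 2) * w = 0 := by linear_combination x * him - y * huv.2
    have hN : x ^ 2 + y ^ 2 ≠ 0 := fun hN => hu <| by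
      obtain ⟨rfl, rfl⟩ := eq_zero_of_sq_add_sq_eq_zero hneg hN
      rfl
    exact hv (Prod.ext (by simpa [hN] using hz) (by simpa [hN] using hw))
  · intro hεt
    exact ⟨(1, 1), (1, -1), by simp, by simp, by simp [mulS, hεt]⟩

lemma sign_eq_of_eq_sq_mul (hneg : ¬IsSquare (-1 : K)) {s s' x : K} (hs : s ^ 2 = 1)
    (hs' : s' ^ 2 = 1) (h : s = x ^ 2 * s') : s = s' := by
  rcases sq_eq_one_iff.1 hs with rfl | rfl <;> rcases sq_eq_one_iff.1 hs' with rfl | rfl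
  · rfl
  · exact absurd ⟨x, by linear_combination -h⟩ hneg
  · exact absurd ⟨x, by linear_combination h⟩ hneg
  · rfl

lemma IsoS.comm_params_eq (hneg : ¬IsSquare (-1 : K)) {t ε t' ε' : K} (ht : t ^ 2 = 1)
    (hε : ε ^ 2 = 1) (ht' : t' ^ 2 = 1) (hε' : ε' ^ 2 = 1)
    (h : IsoS 0 (ε * t) t 0 t 0 0 (ε' * t') t' 0 t' 0) : t = t' ∧ ε = ε' := by
  have hε_iff : ε = 1 ↔ ε' = 1 := by
    rw [← exists_leftIdentity_comm_iff ht, ← exists_leftIdentity_comm_iff ht']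
    exact ⟨h.exists_leftIdentity, h.symm.exists_leftIdentity⟩
  have hεt_iff : ε * t = 1 ↔ ε' * t' = 1 := by
    rw [← exists_mul_eq_zero_comm_iff hneg ht hε, ← exists_mul_eq_zero_comm_iff hneg ht' hε']
    exact ⟨h.exists_mul_eq_zero, h.symm.exists_mul_eq_zero⟩
  grind

lemma IsoS.eq_neg (h : IsoS 0 q a b c d 0 q' a' b' (-a') d') : c = -a := by
  obtain ⟨x, y, w, -, -, -, -, rfl, rfl, -, -⟩ := isoS_neg_iff_exists_triangular.1 h
  rfl

lemma IsoS.cross_mul_eq (h : IsoS 0 q a b c d 0 q' a' b' (-a') d') : a * q' = a' * q := by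
  obtain ⟨x, y, w, -, -, -, rfl, rfl, -, -, -⟩ := isoS_neg_iff_exists_triangular.1 h
  ring

lemma IsoS.exists_discrim_eq (h : IsoS 0 q a b c d 0 q' a' b' (-a') d') :
    ∃ x, x ≠ 0 ∧ (b + d) ^ 2 - 4 * q = x ^ 2 * ((b' + d') ^ 2 - 4 * q') := by
  obtain ⟨x, y, w, hx, -, rfl, rfl, -, -, rfl, rfl⟩ := isoS_neg_iff_exists_triangular.1 h
  exact ⟨x, hx, by ring⟩

lemma IsoS.anticomm_params_eq (hneg : ¬IsSquare (-1 : K)) {t ε t' ε' : K}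
    (ht : t ^ 2 = 1) (hε : ε ^ 2 = 1) (ht' : t' ^ 2 = 1) (hε' : ε' ^ 2 = 1)
    (h : IsoS 0 (ε * t) t 0 (-t) 0 0 (ε' * t') t' 0 (-t') 0) : t = t' ∧ ε = ε' := by
  obtain ⟨x, -, hdisc⟩ := h.exists_discrim_eq
  have h2 := two_ne_zero_of_not_isSquare_neg_one hneg
  have h4 := four_ne_zero_of_two_ne_zero h2
  have hεt : ε * t = ε' * t' := by
    refine sign_eq_of_eq_sq_mul (x := x) hneg ?_ ?_ (mul_left_cancel₀ h4 ?_)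
    · rw [mul_pow, hε, ht, one_mul]
    · rw [mul_pow, hε', ht', one_mul]
    · linear_combination -hdisc
  have hratio : t * (ε' * t') = t' * (ε * t) := h.cross_mul_eq
  grind

lemma IsoS.degenerate_cross_mul_eq (h2 : (2 : K) ≠ 0) (hs : b + d ≠ 0) (hs' : b' + d' ≠ 0)
    (h : IsoS 0 ((b + d) ^ 2 / 4) ((d ^ 2 - b ^ 2) / 4) b (-((d ^ 2 - b ^ 2) / 4)) d
      0 ((b' + d') ^ 2 / 4) ((d' ^ 2 - b' ^ 2) / 4) b' (-((d' ^ 2 - b' ^ 2) / 4)) d') :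
    d * b' = b * d' := by
  have h4 := four_ne_zero_of_two_ne_zero h2
  have hratio := h.cross_mul_eq
  field_simp at hratio
  have hcross : 2 * ((b + d) * (b' + d')) * (d * b') = 2 * ((b + d) * (b' + d')) * (b * d') := by
    linear_combination hratio
  exact mul_left_cancel₀ (mul_ne_zero h2 (mul_ne_zero hs hs')) hcross

lemma IsNormalForm.cases (h2 : (2 : K) ≠ 0) (h : IsNormalForm p q a b c d) :
    p = 0 ∧
      ((∃ ε, a ^ 2 = 1 ∧ ε ^ 2 = 1 ∧ q = ε * a ∧ b = 0 ∧ c = a ∧ d = 0) ∨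
      (∃ ε, a ^ 2 = 1 ∧ ε ^ 2 = 1 ∧ q = ε * a ∧ b = 0 ∧ c = -a ∧ d = 0) ∨
      (b + d ≠ 0 ∧ q = (b + d) ^ 2 / 4 ∧ a = (d ^ 2 - b ^ 2) / 4 ∧
        c = -((d ^ 2 - b ^ 2) / 4) ∧ (b = 0 ∧ d = 2 ∨ b = -4 ∧ d = 0 ∨ b = 1 ∧ d ≠ 0))) := by
  have h4 := four_ne_zero_of_two_ne_zero h2
  simp only [IsNormalForm, Prod.mk.injEq] at h
  rcases h with ⟨rfl, rfl, rfl, rfl, rfl, rfl⟩ | ⟨rfl, rfl, rfl, rfl, rfl, rfl⟩ |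
    ⟨t, ε, δ, ht, hε, hδ, rfl, rfl, rfl, rfl, rfl, rfl⟩ |
    ⟨t, h0, h1, h1', rfl, rfl, rfl, rfl, rfl, rfl⟩
  · refine ⟨rfl, .inr <| .inr ?_⟩; grind
  · refine ⟨rfl, .inr <| .inr ?_⟩; grind
  · grind
  · refine ⟨rfl, .inr <| .inr ?_⟩; grind

theorem IsNormalForm.eq_of_isoS (hneg : ¬IsSquare (-1 : K))
    {p₁ q₁ a₁ b₁ c₁ d₁ p₂ q₂ a₂ b₂ c₂ d₂ : K} (h₁ : IsNormalForm p₁ q₁ a₁ b₁ c₁ d₁)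
    (h₂ : IsNormalForm p₂ q₂ a₂ b₂ c₂ d₂) (h : IsoS p₁ q₁ a₁ b₁ c₁ d₁ p₂ q₂ a₂ b₂ c₂ d₂) :
    (p₁, q₁, a₁, b₁, c₁, d₁) = (p₂, q₂, a₂, b₂, c₂, d₂) := by
  have h2 := two_ne_zero_of_not_isSquare_neg_one hneg
  have h4 := four_ne_zero_of_two_ne_zero h2
  obtain ⟨rfl, shape₁⟩ := h₁.cases h2
  obtain ⟨rfl, shape₂⟩ := h₂.cases h2
  rcases shape₁ with ⟨ε₁, ha₁, hε₁, rfl, rfl, rfl, rfl⟩ | ⟨ε₁, ha₁, hε₁, rfl, rfl, rfl, rfl⟩ |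
      ⟨hs₁, rfl, rfl, rfl, hbd₁⟩ <;>
    rcases shape₂ with ⟨ε₂, ha₂, hε₂, rfl, rfl, rfl, rfl⟩ | ⟨ε₂, ha₂, hε₂, rfl, rfl, rfl, rfl⟩ |
      ⟨hs₂, rfl, rfl, rfl, hbd₂⟩
  · obtain ⟨rfl, rfl⟩ := h.comm_params_eq hneg ha₁ hε₁ ha₂ hε₂
    rfl
  · have hca := h.eq_neg
    grind
  · have hca := h.eq_neg
    grind
  · have hca := h.symm.eq_neg
    grind
  · obtain ⟨rfl, rfl⟩ := h.anticomm_params_eq hneg ha₁ hε₁ ha₂ hε₂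
    rfl
  · obtain ⟨x, -, hdisc⟩ := h.exists_discrim_eq
    grind
  · have hca := h.symm.eq_neg
    grind
  · obtain ⟨x, -, hdisc⟩ := h.symm.exists_discrim_eq
    grind
  · have hcross := h.degenerate_cross_mul_eq h2 hs₁ hs₂
    obtain ⟨rfl, rfl⟩ : b₁ = b₂ ∧ d₁ = d₂ := by grind
    rfl

theorem classification_II1_real_general (hsq : ∀ x : K, IsSquare x ∨ IsSquare (-x))
    (hneg : ¬IsSquare (-1 : K)) :
    (∀ q a b c d : K, a ≠ 0 → EndoComm 0 q a b c d → HasNormalForm 0 q a b c d) ∧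
    (∀ p₁ q₁ a₁ b₁ c₁ d₁ p₂ q₂ a₂ b₂ c₂ d₂ : K,
        IsNormalForm p₁ q₁ a₁ b₁ c₁ d₁ → IsNormalForm p₂ q₂ a₂ b₂ c₂ d₂ →
        (p₁, q₁, a₁, b₁, c₁, d₁) ≠ (p₂, q₂, a₂, b₂, c₂, d₂) →
        ¬ IsoS p₁ q₁ a₁ b₁ c₁ d₁ p₂ q₂ a₂ b₂ c₂ d₂) :=
  ⟨fun _ _ _ _ _ ha h => h.hasNormalForm (two_ne_zero_of_not_isSquare_neg_one hneg) hsq ha,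
    fun _ _ _ _ _ _ _ _ _ _ _ _ h₁ h₂ hne h => hne (h₁.eq_of_isoS hneg h₂ h)⟩

theorem classification_II1_real :
    (∀ q a b c d : ℝ, a ≠ 0 → c ≠ 0 → EndoComm 0 q a b c d →
        ∃ p' q' a' b' c' d' : ℝ, InListR p' q' a' b' c' d' ∧
          IsoS 0 q a b c d p' q' a' b' c' d') ∧
    (∀ p₁ q₁ a₁ b₁ c₁ d₁ p₂ q₂ a₂ b₂ c₂ d₂ : ℝ,
        InListR p₁ q₁ a₁ b₁ c₁ d₁ → InListR p₂ q₂ a₂ b₂ c₂ d₂ →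
        (p₁, q₁, a₁, b₁, c₁, d₁) ≠ (p₂, q₂, a₂, b₂, c₂, d₂) →
        ¬ IsoS p₁ q₁ a₁ b₁ c₁ d₁ p₂ q₂ a₂ b₂ c₂ d₂) := by
  obtain ⟨exists_form, not_iso⟩ := classification_II1_real_general (K := ℝ)
    (fun x => by simpa using le_total 0 x) (by norm_num [Real.isSquare_iff])
  exact ⟨fun q a b c d ha _ => exists_form q a b c d ha, not_iso⟩
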